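/- arXiv:2110.06174 — 3 statements merged into one kernel-verified Lean document; each statement's English description precedes it below -/
import Mathlib

section
/- If γ : ℝ → ℝ⁶ is a solution of the Hamiltonian system associated to the regularized Hamiltonian Γ, then the time-reversed curve s ↦ S_r γ(−s), whose components are (Q₂(−s), Q₁(−s), Q₃(−s), −P₂(−s), −P₁(−s), −P₃(−s)), is also a solution of the same Hamiltonian system. -/
/-- The regularized Hamiltonian `Γ` of the eight-body cubic configuration, with fixed
energy `E`, as a function of `x = (Q₁,Q₂,Q₃,P₁,P₂,P₃) ∈ ℝ⁶`. -/
noncomputable def cubicGamma (E : ℝ) (x : Fin 6 → ℝ) : ℝ :=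
  (x 3) ^ 2 * (x 1) ^ 2 * (x 2) ^ 2 + (x 0) ^ 2 * (x 4) ^ 2 * (x 2) ^ 2 +
      (x 0) ^ 2 * (x 1) ^ 2 * (x 5) ^ 2
    - 2 * (x 0) ^ 2 * (x 1) ^ 2 * (x 2) ^ 2 / Real.sqrt ((x 0) ^ 4 + (x 1) ^ 4 + (x 2) ^ 4)
    - 2 * (x 0) ^ 2 * (x 1) ^ 2 * (x 2) ^ 2 / Real.sqrt ((x 0) ^ 4 + (x 1) ^ 4)
    - 2 * (x 0) ^ 2 * (x 1) ^ 2 * (x 2) ^ 2 / Real.sqrt ((x 0) ^ 4 + (x 2) ^ 4)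
    - 2 * (x 0) ^ 2 * (x 1) ^ 2 * (x 2) ^ 2 / Real.sqrt ((x 1) ^ 4 + (x 2) ^ 4)
    - 2 * (x 1) ^ 2 * (x 2) ^ 2 - 2 * (x 0) ^ 2 * (x 2) ^ 2 - 2 * (x 0) ^ 2 * (x 1) ^ 2
    - E * (x 0) ^ 2 * (x 1) ^ 2 * (x 2) ^ 2

/-- The index in `Fin 6` of the coordinate `Qᵢ`. -/
def Qidx (i : Fin 3) : Fin 6 := ⟨i.val, by omega⟩

/-- The index in `Fin 6` of the coordinate `Pᵢ`. -/
def Pidx (i : Fin 3) : Fin 6 := ⟨i.val + 3, by omega⟩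

/-- Partial derivative of `f : ℝ⁶ → ℝ` with respect to the `i`-th coordinate at `x`. -/
noncomputable def pderiv6 (f : (Fin 6 → ℝ) → ℝ) (i : Fin 6) (x : Fin 6 → ℝ) : ℝ :=
  deriv (fun t => f (Function.update x i t)) (x i)

/-- `γ : ℝ → ℝ⁶` is a solution of the Hamiltonian system associated to `Γ` (energy `E`):
`Qᵢ′(s) = ∂Γ/∂Pᵢ(γ(s))` and `Pᵢ′(s) = −∂Γ/∂Qᵢ(γ(s))` for `i = 1,2,3`. -/
def IsCubicSol (E : ℝ) (γ : ℝ → Fin 6 → ℝ) : Prop :=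
  ∀ s : ℝ, ∀ i : Fin 3,
    HasDerivAt (fun u => γ u (Qidx i)) (pderiv6 (cubicGamma E) (Pidx i) (γ s)) s ∧
    HasDerivAt (fun u => γ u (Pidx i)) (-pderiv6 (cubicGamma E) (Qidx i) (γ s)) s

/-- The time-preserving symmetry matrix `S_f = diag(R, R)`, `R = [[0,0,1],[−1,0,0],[0,1,0]]`. -/
def Sf : Matrix (Fin 6) (Fin 6) ℝ :=
  !![0, 0, 1, 0, 0, 0;
     -1, 0, 0, 0, 0, 0;
     0, 1, 0, 0, 0, 0;
     0, 0, 0, 0, 0, 1;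
     0, 0, 0, -1, 0, 0;
     0, 0, 0, 0, 1, 0]

/-- The time-reversing symmetry matrix `S_r = diag(S, −S)`, `S = [[0,1,0],[1,0,0],[0,0,1]]`. -/
def Sr : Matrix (Fin 6) (Fin 6) ℝ :=
  !![0, 1, 0, 0, 0, 0;
     1, 0, 0, 0, 0, 0;
     0, 0, 1, 0, 0, 0;
     0, 0, 0, 0, -1, 0;
     0, 0, 0, -1, 0, 0;
     0, 0, 0, 0, 0, -1]

/-!
`Γ ∘ S_r = Γ`, and differentiating this identity along a coordinate axis shows that `S_r`
carries the Hamiltonian vector field to its negative; the reversal of time supplies the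
compensating sign. Since `S_r` maps coordinate axes to coordinate axes, each partial derivative is
matched with a single other one along a linear image of the same line. This is an identity of
one-variable derivatives, junk values included, so it needs no chain rule for `Γ` on `ℝ⁶`.
-/

/-- The Hamiltonian system on `ℝ⁶` of an arbitrary Hamiltonian `H`, so that `IsCubicSol E` is
by definition the case `H = cubicGamma E`. -/
def IsHamiltonianSol (H : (Fin 6 → ℝ) → ℝ) (γ : ℝ → Fin 6 → ℝ) : Prop :=
  ∀ s : ℝ, ∀ i : Fin 3,
    HasDerivAt (fun u => γ u (Qidx i)) (pderiv6 H (Pidx i) (γ s)) s ∧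
    HasDerivAt (fun u => γ u (Pidx i)) (-pderiv6 H (Qidx i) (γ s)) s

/-- `A` acts on phase space as `(Q, P) ↦ (Q ∘ σ, -P ∘ σ)`: time reversal combined with a
permutation of the degrees of freedom. -/
structure IsPermReversor (σ : Equiv.Perm (Fin 3)) (A : Matrix (Fin 6) (Fin 6) ℝ) : Prop where
  mulVec_Qidx (x : Fin 6 → ℝ) (i : Fin 3) : A.mulVec x (Qidx i) = x (Qidx (σ i))
  mulVec_Pidx (x : Fin 6 → ℝ) (i : Fin 3) : A.mulVec x (Pidx i) = -x (Pidx (σ i))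

section LineDeriv

variable {𝕜 F : Type*} [NontriviallyNormedField 𝕜] [NormedAddCommGroup F] [NormedSpace 𝕜 F]

theorem lineDeriv_comp_linearMap {E E' : Type*} [AddCommGroup E] [Module 𝕜 E]
    [AddCommGroup E'] [Module 𝕜 E'] (f : E' → F) (L : E →ₗ[𝕜] E') (x v : E) :
    lineDeriv 𝕜 (f ∘ L) x v = lineDeriv 𝕜 f (L x) (L v) := by
  simp only [lineDeriv, Function.comp_apply, map_add, map_smul]

theorem lineDeriv_map_of_comp_eq {E : Type*} [AddCommGroup E] [Module 𝕜 E] {f : E → F}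
    {L : E →ₗ[𝕜] E} (hf : f ∘ L = f) (x v : E) :
    lineDeriv 𝕜 f (L x) (L v) = lineDeriv 𝕜 f x v := by
  rw [← lineDeriv_comp_linearMap, hf]

theorem deriv_comp_update_eq_lineDeriv {ι : Type*} [DecidableEq ι] (f : (ι → 𝕜) → F) (i : ι)
    (x : ι → 𝕜) :
    deriv (fun t => f (Function.update x i t)) (x i) = lineDeriv 𝕜 f x (Pi.single i 1) := by
  have update_eq (t : 𝕜) :
      x + t • Pi.single i 1 = Function.update x i (x i + t) := by
    ext j
    obtain rfl | hj := eq_or_ne j i <;> simp [*]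
  simp only [lineDeriv, update_eq]
  rw [deriv_comp_const_add (fun t => f (Function.update x i t)), add_zero]

end LineDeriv

theorem pderiv6_eq_lineDeriv (f : (Fin 6 → ℝ) → ℝ) (i : Fin 6) (x : Fin 6 → ℝ) :
    pderiv6 f i x = lineDeriv ℝ f x (Pi.single i 1) :=
  deriv_comp_update_eq_lineDeriv f i x

theorem exists_eq_Qidx_or_eq_Pidx : ∀ j : Fin 6, ∃ i : Fin 3, j = Qidx i ∨ j = Pidx i := by
  decide

theorem Qidx_injective : Function.Injective Qidx := by decide

theorem Pidx_injective : Function.Injective Pidx := by decide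

theorem Qidx_ne_Pidx : ∀ i j : Fin 3, Qidx i ≠ Pidx j := by decide

namespace IsPermReversor

variable {σ : Equiv.Perm (Fin 3)} {A : Matrix (Fin 6) (Fin 6) ℝ} {H : (Fin 6 → ℝ) → ℝ}

theorem mulVec_single_Qidx (hA : IsPermReversor σ A) (i : Fin 3) :
    A.mulVec (Pi.single (Qidx (σ i)) 1) = Pi.single (Qidx i) 1 := by
  ext j
  obtain ⟨k, rfl | rfl⟩ := exists_eq_Qidx_or_eq_Pidx j
  · simp only [hA.mulVec_Qidx, Pi.single_apply, Qidx_injective.eq_iff, σ.injective.eq_iff]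
  · simp only [hA.mulVec_Pidx, Pi.single_apply, (Qidx_ne_Pidx _ _).symm, if_false, neg_zero]

theorem mulVec_single_Pidx (hA : IsPermReversor σ A) (i : Fin 3) :
    A.mulVec (Pi.single (Pidx (σ i)) 1) = -Pi.single (Pidx i) 1 := by
  ext j
  rw [Pi.neg_apply]
  obtain ⟨k, rfl | rfl⟩ := exists_eq_Qidx_or_eq_Pidx j
  · simp only [hA.mulVec_Qidx, Pi.single_apply, Qidx_ne_Pidx, if_false, neg_zero]
  · simp only [hA.mulVec_Pidx, Pi.single_apply, Pidx_injective.eq_iff, σ.injective.eq_iff]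

theorem pderiv6_Qidx_mulVec (hA : IsPermReversor σ A) (hH : H ∘ A.mulVec = H)
    (i : Fin 3) (x : Fin 6 → ℝ) :
    pderiv6 H (Qidx i) (A.mulVec x) = pderiv6 H (Qidx (σ i)) x :=
  calc pderiv6 H (Qidx i) (A.mulVec x)
    _ = lineDeriv ℝ H (A.mulVec x) (A.mulVec (Pi.single (Qidx (σ i)) 1)) := by
      rw [pderiv6_eq_lineDeriv, hA.mulVec_single_Qidx]
    _ = lineDeriv ℝ H x (Pi.single (Qidx (σ i)) 1) :=
      lineDeriv_map_of_comp_eq (L := A.mulVecLin) hH x _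
    _ = pderiv6 H (Qidx (σ i)) x := (pderiv6_eq_lineDeriv H _ x).symm

theorem pderiv6_Pidx_mulVec (hA : IsPermReversor σ A) (hH : H ∘ A.mulVec = H)
    (i : Fin 3) (x : Fin 6 → ℝ) :
    pderiv6 H (Pidx i) (A.mulVec x) = -pderiv6 H (Pidx (σ i)) x :=
  calc pderiv6 H (Pidx i) (A.mulVec x)
    _ = -lineDeriv ℝ H (A.mulVec x) (A.mulVec (Pi.single (Pidx (σ i)) 1)) := by
      rw [pderiv6_eq_lineDeriv, hA.mulVec_single_Pidx, lineDeriv_neg, neg_neg]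
    _ = -lineDeriv ℝ H x (Pi.single (Pidx (σ i)) 1) :=
      congrArg Neg.neg (lineDeriv_map_of_comp_eq (L := A.mulVecLin) hH x _)
    _ = -pderiv6 H (Pidx (σ i)) x := by rw [pderiv6_eq_lineDeriv]

theorem isHamiltonianSol_comp_neg (hA : IsPermReversor σ A) (hH : H ∘ A.mulVec = H)
    {γ : ℝ → Fin 6 → ℝ} (hγ : IsHamiltonianSol H γ) :
    IsHamiltonianSol H (fun s => A.mulVec (γ (-s))) := by
  intro s i
  obtain ⟨hQ, hP⟩ := hγ (-s) (σ i)
  simp only [hA.mulVec_Qidx, hA.mulVec_Pidx, hA.pderiv6_Qidx_mulVec hH,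
    hA.pderiv6_Pidx_mulVec hH]
  constructor
  · simpa [Function.comp_def] using hQ.comp s (hasDerivAt_neg s)
  · simpa [Function.comp_def] using (hP.comp s (hasDerivAt_neg s)).fun_neg

end IsPermReversor

theorem Sr_mulVec (x : Fin 6 → ℝ) :
    Sr.mulVec x = ![x 1, x 0, x 2, -x 4, -x 3, -x 5] := by
  ext i
  fin_cases i <;> simp [Sr, Matrix.mulVec, dotProduct, Fin.sum_univ_six]

theorem isPermReversor_Sr : IsPermReversor (Equiv.swap 0 1) Sr where
  mulVec_Qidx x i := by
    rw [Sr_mulVec]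
    fin_cases i <;> rfl
  mulVec_Pidx x i := by
    rw [Sr_mulVec]
    fin_cases i <;> rfl

theorem cubicGamma_comp_Sr (E : ℝ) : cubicGamma E ∘ Sr.mulVec = cubicGamma E := by
  ext x
  simp only [Function.comp_apply, Sr_mulVec, cubicGamma, Matrix.cons_val,
    add_comm (x 1 ^ 4) (x 0 ^ 4)]
  ring

/-- If `γ` is a solution of the Hamiltonian system associated to the regularized
Hamiltonian `Γ`, then the time-reversed curve `s ↦ S_r γ(−s)`, with components
`(Q₂(−s), Q₁(−s), Q₃(−s), −P₂(−s), −P₁(−s), −P₃(−s))`, is also a solution. -/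
theorem Sr_symmetry (E : ℝ) (γ : ℝ → Fin 6 → ℝ) (hγ : IsCubicSol E γ) :
    IsCubicSol E (fun s => Sr.mulVec (γ (-s))) := by
  exact isPermReversor_Sr.isHamiltonianSol_comp_neg (cubicGamma_comp_Sr E) hγ
end

section
/- Suppose γ : ℝ → ℝ⁶ is a solution of the Hamiltonian system associated to the regularized Hamiltonian Γ (with fixed energy E < 0) satisfying, for some τ > 0 and some α, β ∈ ℝ, γ(0) = (0, α, α, √2, −β, β) and γ(2τ) = (α, 0, α, β, −√2, −β). Then γ satisfies γ(s + 2τ) = S_f γ(s) for all s ∈ ℝ, and consequently γ is 12τ-periodic: γ(s + 12τ) = γ(s) for all s ∈ ℝ. -/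
/-! Near points where two of the `Qᵢ` vanish, `Γ` is not `C²`. It is still of class `C^{1,1}_loc`,
which is enough for solutions to be unique: its singular terms are polynomial multiples of
`∏ vᵢ² / √(∑ vᵢ⁴)`, where `v` collects two or three of the `Qᵢ`. This function is smooth away from
`0` and positively homogeneous of degree at least `2`, so its gradient is positively homogeneous of
positive degree, hence locally Lipschitz also at the origin.

The matrix `S_f` is symplectic and leaves `Γ` invariant, so it maps solutions to solutions. The
boundary values say that `γ(· + 2τ)` and `S_f γ` agree at `0`; by uniqueness they coincide, and
`S_f⁶ = 1` turns this shift law into a period.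
-/

open Function Set
open scoped Matrix NNReal

/-! ### Positively homogeneous maps -/

section PosHomogeneous

variable {E F : Type*} [NormedAddCommGroup E] [NormedSpace ℝ E] [NormedAddCommGroup F]
  [NormedSpace ℝ F] {f : E → F} {n : ℕ}

/-- Positive homogeneity of degree `n`. Only factors `t > 0` are allowed, so that norms and square
roots of even forms qualify; for `n ≠ 0` it still forces `f 0 = 0`. -/
def PosHomogeneous (n : ℕ) (f : E → F) : Prop :=
  ∀ ⦃t : ℝ⦄, 0 < t → ∀ x, f (t • x) = t ^ n • f x

namespace PosHomogeneous

lemma map_zero (hf : PosHomogeneous n f) (hn : n ≠ 0) : f 0 = 0 := by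
  have h : (1 - (2 : ℝ) ^ n) • f 0 = 0 := by
    rw [sub_smul, one_smul, ← hf two_pos, smul_zero, sub_self]
  exact (smul_eq_zero.1 h).resolve_left
    (sub_ne_zero.2 (one_lt_pow₀ one_lt_two hn).ne)

lemma eq_norm_pow_smul_normalize (hf : PosHomogeneous n f) (hn : n ≠ 0) (x : E) :
    f x = ‖x‖ ^ n • f (NormedSpace.normalize x) := by
  rcases eq_or_ne x 0 with rfl | hx
  · simp [hf.map_zero hn, hn]
  · rw [← hf (norm_pos_iff.2 hx), NormedSpace.norm_smul_normalize]

lemma fderiv (hf : PosHomogeneous (n + 1) f) : PosHomogeneous n (fderiv ℝ f) := by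
  intro t ht x
  have h : t • _root_.fderiv ℝ f (t • x) = t • t ^ n • _root_.fderiv ℝ f x := by
    have hcomp : (f <| t • ·) = t ^ (n + 1) • f := funext fun y => hf ht y
    rw [← fderiv_comp_smul, hcomp, fderiv_const_smul_field, smul_smul, ← pow_succ', Pi.smul_apply]
  exact smul_right_injective _ ht.ne' h

lemma exists_norm_le [ProperSpace E] (hf : PosHomogeneous n f) (hn : n ≠ 0)
    (hc : ContinuousOn f {0}ᶜ) : ∃ M, ∀ x, ‖f x‖ ≤ M * ‖x‖ ^ n := by
  obtain ⟨M, hM⟩ := (isCompact_sphere (0 : E) 1).exists_bound_of_continuousOn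
    (hc.mono fun x hx => ne_zero_of_mem_unit_sphere ⟨x, hx⟩)
  refine ⟨M, fun x => ?_⟩
  rcases eq_or_ne x 0 with rfl | hx
  · simp [hf.map_zero hn, hn]
  · rw [hf.eq_norm_pow_smul_normalize hn, norm_smul, norm_pow, norm_norm, mul_comm]
    gcongr
    exact hM _ (by simpa using hx)

lemma hasFDerivAt_zero [ProperSpace E] (hf : PosHomogeneous n f) (hn : 1 < n)
    (hc : ContinuousOn f {0}ᶜ) : HasFDerivAt f (0 : E →L[ℝ] F) 0 := by
  obtain ⟨M, hM⟩ := hf.exists_norm_le (by omega) hc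
  exact Asymptotics.IsBigO.hasFDerivAt (n := n)
    (.of_bound M (.of_forall fun x => by simpa using hM x)) hn

end PosHomogeneous

lemma norm_normalize_le_one (x : E) : ‖NormedSpace.normalize x‖ ≤ 1 := by
  rcases eq_or_ne x 0 with rfl | hx
  · simp
  · exact (NormedSpace.norm_normalize_eq_one_iff.2 hx).le

lemma norm_mul_norm_normalize_sub_le (x y : E) :
    ‖x‖ * ‖NormedSpace.normalize x - NormedSpace.normalize y‖ ≤ 2 * ‖x - y‖ := by
  calc ‖x‖ * ‖NormedSpace.normalize x - NormedSpace.normalize y‖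
      = ‖x - ‖x‖ • NormedSpace.normalize y‖ := by
        rw [← norm_norm x, ← norm_smul, norm_norm, smul_sub, NormedSpace.norm_smul_normalize]
    _ = ‖(x - y) + (‖y‖ - ‖x‖) • NormedSpace.normalize y‖ := by
        rw [sub_smul, NormedSpace.norm_smul_normalize, sub_add_sub_cancel]
    _ ≤ ‖x - y‖ + |‖y‖ - ‖x‖| := by
        refine norm_add_le_of_le le_rfl ?_
        rw [norm_smul, Real.norm_eq_abs]
        exact mul_le_of_le_one_right (abs_nonneg _) (norm_normalize_le_one y)
    _ ≤ 2 * ‖x - y‖ := by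
        linarith [abs_norm_sub_norm_le y x, norm_sub_rev x y]

lemma lipschitzWith_norm_smul_comp_normalize {M L : ℝ≥0}
    (hM : ∀ x ∈ Metric.sphere (0 : E) 1, ‖f x‖ ≤ M)
    (hL : LipschitzOnWith L f (Metric.sphere 0 1)) :
    LipschitzWith (M + L * 2) fun x => ‖x‖ • f (NormedSpace.normalize x) := by
  have hsphere {x : E} (hx : x ≠ 0) : NormedSpace.normalize x ∈ Metric.sphere (0 : E) 1 := by
    simpa using hx
  have at_zero (x : E) : ‖‖x‖ • f (NormedSpace.normalize x)‖ ≤ (M + L * 2) * ‖x‖ := by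
    rcases eq_or_ne x 0 with rfl | hx
    · simp
    · rw [norm_smul, norm_norm, mul_comm]
      gcongr
      exact (hM _ (hsphere hx)).trans (le_add_of_nonneg_right (by positivity))
  refine LipschitzWith.of_dist_le_mul fun x y => ?_
  simp only [dist_eq_norm, NNReal.coe_add, NNReal.coe_mul, NNReal.coe_ofNat]
  rcases eq_or_ne x 0 with rfl | hx
  · simpa using at_zero y
  rcases eq_or_ne y 0 with rfl | hy
  · simpa using at_zero x
  have radial : ‖(‖x‖ - ‖y‖) • f (NormedSpace.normalize y)‖ ≤ M * ‖x - y‖ := by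
    rw [norm_smul, mul_comm]
    exact mul_le_mul (hM _ (hsphere hy)) (abs_norm_sub_norm_le x y) (norm_nonneg _) M.2
  have spherical :
      ‖‖x‖ • (f (NormedSpace.normalize x) - f (NormedSpace.normalize y))‖ ≤ L * 2 * ‖x - y‖ :=
    calc _ ≤ ‖x‖ * (L * ‖NormedSpace.normalize x - NormedSpace.normalize y‖) := by
          rw [norm_smul, norm_norm]
          gcongr
          exact hL.norm_sub_le (hsphere hx) (hsphere hy)
      _ = L * (‖x‖ * ‖NormedSpace.normalize x - NormedSpace.normalize y‖) := by ring
      _ ≤ L * (2 * ‖x - y‖) := by gcongr L * ?_; exact norm_mul_norm_normalize_sub_le x y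
      _ = L * 2 * ‖x - y‖ := by ring
  calc ‖‖x‖ • f (NormedSpace.normalize x) - ‖y‖ • f (NormedSpace.normalize y)‖
      = ‖(‖x‖ - ‖y‖) • f (NormedSpace.normalize y)
          + ‖x‖ • (f (NormedSpace.normalize x) - f (NormedSpace.normalize y))‖ := by
        congr 1; module
    _ ≤ M * ‖x - y‖ + L * 2 * ‖x - y‖ := norm_add_le_of_le radial spherical
    _ = (M + L * 2) * ‖x - y‖ := by ring

lemma locallyLipschitz_smul {X : Type*} [PseudoEMetricSpace X] {c : X → ℝ} {g : X → F}
    (hc : LocallyLipschitz c) (hg : LocallyLipschitz g) : LocallyLipschitz fun x => c x • g x :=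
  (contDiff_smul (𝕜 := ℝ) (n := 1)).locallyLipschitz.comp (hc.prodMk hg)

lemma PosHomogeneous.locallyLipschitz [ProperSpace E] (hf : PosHomogeneous (n + 1) f)
    (hlip : LocallyLipschitzOn {0}ᶜ f) : LocallyLipschitz f := by
  have hsphere : LocallyLipschitzOn (Metric.sphere 0 1) f :=
    hlip.mono fun x hx => ne_zero_of_mem_unit_sphere ⟨x, hx⟩
  obtain ⟨L, hL⟩ := hsphere.exists_lipschitzOnWith_of_compact (isCompact_sphere 0 1)
  obtain ⟨M, hM⟩ := (isCompact_sphere (0 : E) 1).exists_bound_of_continuousOn hsphere.continuousOn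
  have hcone := (lipschitzWith_norm_smul_comp_normalize (M := M.toNNReal)
    (fun x hx => (hM x hx).trans M.le_coe_toNNReal) hL).locallyLipschitz
  have hpolar : f = fun x => ‖x‖ ^ n • ‖x‖ • f (NormedSpace.normalize x) := by
    funext x
    rw [hf.eq_norm_pow_smul_normalize n.succ_ne_zero, smul_smul, pow_succ]
  have hpow : LocallyLipschitz fun x : E => ‖x‖ ^ n :=
    (contDiff_id.pow n (𝕜 := ℝ)).locallyLipschitz.comp lipschitzWith_one_norm.locallyLipschitz
  rw [hpolar]
  exact locallyLipschitz_smul hpow hcone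

end PosHomogeneous

/-! ### Functions with locally Lipschitz derivative -/

section IsC11

variable {E F G : Type*} [NormedAddCommGroup E] [NormedSpace ℝ E] [NormedAddCommGroup F]
  [NormedSpace ℝ F] [NormedAddCommGroup G] [NormedSpace ℝ G]

/-- The class `C^{1,1}_loc` of differentiable maps with locally Lipschitz derivative: the regularity
that makes the Hamiltonian flow of a function well posed. -/
structure IsC11 (f : E → F) : Prop where
  differentiable : Differentiable ℝ f
  locallyLipschitz_fderiv : LocallyLipschitz (fderiv ℝ f)

namespace IsC11

lemma of_contDiff {f : E → F} (hf : ContDiff ℝ 2 f) : IsC11 f where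
  differentiable := hf.differentiable two_ne_zero
  locallyLipschitz_fderiv := (hf.fderiv_right (m := 1) le_rfl).locallyLipschitz

lemma locallyLipschitz {f : E → F} (hf : IsC11 f) : LocallyLipschitz f :=
  (contDiff_one_iff_fderiv.2
    ⟨hf.differentiable, hf.locallyLipschitz_fderiv.continuous⟩).locallyLipschitz

lemma comp_continuousLinearMap {f : F → G} (hf : IsC11 f) (L : E →L[ℝ] F) : IsC11 (f ∘ L) where
  differentiable := hf.differentiable.comp L.differentiable
  locallyLipschitz_fderiv := by
    have hchain : fderiv ℝ (f ∘ L) =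
        (ContinuousLinearMap.compL ℝ E F G).flip L ∘ fderiv ℝ f ∘ L := by
      funext x
      rw [fderiv_comp x (hf.differentiable _) L.differentiableAt, L.fderiv]
      rfl
    rw [hchain]
    exact (ContinuousLinearMap.lipschitz _).locallyLipschitz.comp
      (hf.locallyLipschitz_fderiv.comp L.lipschitz.locallyLipschitz)

lemma sub {f g : E → F} (hf : IsC11 f) (hg : IsC11 g) : IsC11 fun x => f x - g x where
  differentiable := hf.differentiable.fun_sub hg.differentiable
  locallyLipschitz_fderiv := by
    have hsub : fderiv ℝ (fun x => f x - g x) = fun x => fderiv ℝ f x - fderiv ℝ g x :=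
      funext fun x => fderiv_fun_sub (hf.differentiable x) (hg.differentiable x)
    rw [hsub]
    exact hf.locallyLipschitz_fderiv.sub hg.locallyLipschitz_fderiv

lemma mul {f g : E → ℝ} (hf : IsC11 f) (hg : IsC11 g) : IsC11 fun x => f x * g x where
  differentiable := hf.differentiable.fun_mul hg.differentiable
  locallyLipschitz_fderiv := by
    have hmul : fderiv ℝ (fun x => f x * g x) = fun x => f x • fderiv ℝ g x + g x • fderiv ℝ f x :=
      funext fun x => fderiv_fun_mul (hf.differentiable x) (hg.differentiable x)
    rw [hmul]
    exact (locallyLipschitz_smul hf.locallyLipschitz hg.locallyLipschitz_fderiv).add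
      (locallyLipschitz_smul hg.locallyLipschitz hf.locallyLipschitz_fderiv)

end IsC11

lemma PosHomogeneous.isC11 [ProperSpace E] {f : E → F} {n : ℕ} (hf : PosHomogeneous (n + 2) f)
    (hreg : ∀ x ≠ 0, ContDiffAt ℝ 2 f x) : IsC11 f where
  differentiable x := by
    rcases eq_or_ne x 0 with rfl | hx
    · exact (hf.hasFDerivAt_zero (by omega) fun x hx =>
        (hreg x hx).continuousAt.continuousWithinAt).differentiableAt
    · exact (hreg x hx).differentiableAt two_ne_zero
  locallyLipschitz_fderiv := hf.fderiv.locallyLipschitz fun x hx => by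
    obtain ⟨K, s, hs, hK⟩ := ((hreg x hx).fderiv_right (m := 1) le_rfl).exists_lipschitzOnWith
    exact ⟨K, s, mem_nhdsWithin_of_mem_nhds hs, hK⟩

end IsC11

/-! ### Integral curves of locally Lipschitz fields -/

section IntegralCurve

variable {E : Type*} [NormedAddCommGroup E] [NormedSpace ℝ E] {v : E → E} {γ γ' : ℝ → E}

lemma isIntegralCurve_eq_of_locallyLipschitz (hv : LocallyLipschitz v)
    (hγ : IsIntegralCurve γ fun _ => v) (hγ' : IsIntegralCurve γ' fun _ => v) {t₀ : ℝ}
    (h : γ t₀ = γ' t₀) : γ = γ' := by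
  funext t
  obtain ⟨a, b, ht₀, ht⟩ : ∃ a b, t₀ ∈ Ioo a b ∧ t ∈ Ioo a b :=
    ⟨min t₀ t - 1, max t₀ t + 1, by grind, by grind⟩
  have hcompact : IsCompact (γ '' Icc a b ∪ γ' '' Icc a b) :=
    (isCompact_Icc.image hγ.continuous).union (isCompact_Icc.image hγ'.continuous)
  obtain ⟨K, hK⟩ := hv.locallyLipschitzOn.exists_lipschitzOnWith_of_compact hcompact
  exact ODE_solution_unique_of_mem_Ioo (fun _ _ => hK) ht₀
    (fun s hs => ⟨hγ s, .inl (mem_image_of_mem γ (Ioo_subset_Icc_self hs))⟩)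
    (fun s hs => ⟨hγ' s, .inr (mem_image_of_mem γ' (Ioo_subset_Icc_self hs))⟩) h ht

lemma semiconj_of_locallyLipschitz {L : E →L[ℝ] E} (hv : LocallyLipschitz v)
    (hL : Semiconj L v v) (hγ : IsIntegralCurve γ fun _ => v) {T : ℝ} (hT : γ T = L (γ 0)) :
    Semiconj γ (· + T) L := by
  have hLγ : IsIntegralCurve (L ∘ γ) fun _ => v := fun s => by
    simpa only [comp_apply, ← hL.eq] using L.hasFDerivAt.comp_hasDerivAt s (hγ s)
  exact congrFun (isIntegralCurve_eq_of_locallyLipschitz hv (hγ.comp_add T) hLγ (t₀ := 0)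
    (by simpa using hT))

end IntegralCurve

/-! ### The singular terms of the Hamiltonian -/

section RegularizedPotential

variable {ι κ : Type*} [Fintype ι]

/-- `∏ vᵢ² / √(∑ vᵢ⁴)`, the form in which the distances between the bodies enter the regularized
Hamiltonian. At `v = 0` the convention `x / 0 = 0` supplies the continuous extension. -/
noncomputable def regularizedPotential (v : ι → ℝ) : ℝ :=
  (∏ i, v i ^ 2) / √(∑ i, v i ^ 4)

lemma posHomogeneous_regularizedPotential [Nonempty ι] :
    PosHomogeneous (2 * (Fintype.card ι - 1)) (regularizedPotential (ι := ι)) := by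
  intro t ht v
  obtain ⟨k, hk⟩ := Nat.exists_eq_succ_of_ne_zero (Fintype.card_ne_zero (α := ι))
  have hsqrt : √(∑ i, (t * v i) ^ 4) = t ^ 2 * √(∑ i, v i ^ 4) := by
    rw [← Real.sqrt_sq (sq_nonneg t), ← Real.sqrt_mul (by positivity), Finset.mul_sum]
    simp only [mul_pow, ← pow_mul]
  change (∏ i, (t * v i) ^ 2) / √(∑ i, (t * v i) ^ 4) = _
  rw [hsqrt]
  simp only [regularizedPotential, smul_eq_mul, mul_pow, Finset.prod_mul_distrib,
    Finset.prod_const, Finset.card_univ, hk, Nat.succ_sub_one, pow_succ (t ^ 2) k, pow_mul]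
  field_simp

lemma contDiffAt_regularizedPotential {v : ι → ℝ} (hv : v ≠ 0) {n : WithTop ℕ∞} :
    ContDiffAt ℝ n regularizedPotential v := by
  obtain ⟨i, hi⟩ := Function.ne_iff.1 hv
  have hpos : 0 < ∑ i, v i ^ 4 :=
    Finset.sum_pos' (fun _ _ => by positivity)
      ⟨i, Finset.mem_univ i, (by decide : Even 4).pow_pos hi⟩
  have hnum : ContDiffAt ℝ n (fun v : ι → ℝ => ∏ i, v i ^ 2) v := by fun_prop
  have hden : ContDiffAt ℝ n (fun v : ι → ℝ => ∑ i, v i ^ 4) v := by fun_prop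
  exact hnum.div (hden.sqrt hpos.ne') (Real.sqrt_pos.2 hpos).ne'

lemma isC11_regularizedPotential [Nontrivial ι] : IsC11 (regularizedPotential (ι := ι)) := by
  obtain ⟨k, hk⟩ := Nat.exists_eq_add_of_lt (Fintype.one_lt_card (α := ι))
  have hhom : PosHomogeneous (2 * k + 2) (regularizedPotential (ι := ι)) := by
    have := posHomogeneous_regularizedPotential (ι := ι)
    rwa [show 2 * (Fintype.card ι - 1) = 2 * k + 2 by omega] at this
  exact hhom.isC11 fun _ hv => contDiffAt_regularizedPotential hv

lemma isC11_regularizedPotential_comp [Fintype κ] [Nontrivial ι] (e : ι → κ) :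
    IsC11 fun x : κ → ℝ => regularizedPotential fun i => x (e i) :=
  isC11_regularizedPotential.comp_continuousLinearMap
    (LinearMap.funLeft ℝ ℝ e).toContinuousLinearMap

end RegularizedPotential

lemma cubicGamma_eq (E : ℝ) : cubicGamma E = fun x =>
    (x 3 ^ 2 * x 1 ^ 2 * x 2 ^ 2 + x 0 ^ 2 * x 4 ^ 2 * x 2 ^ 2 + x 0 ^ 2 * x 1 ^ 2 * x 5 ^ 2
      - 2 * x 1 ^ 2 * x 2 ^ 2 - 2 * x 0 ^ 2 * x 2 ^ 2 - 2 * x 0 ^ 2 * x 1 ^ 2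
      - E * x 0 ^ 2 * x 1 ^ 2 * x 2 ^ 2)
    - 2 * regularizedPotential (fun i => x (![0, 1, 2] i))
    - 2 * x 2 ^ 2 * regularizedPotential (fun i => x (![0, 1] i))
    - 2 * x 1 ^ 2 * regularizedPotential (fun i => x (![0, 2] i))
    - 2 * x 0 ^ 2 * regularizedPotential (fun i => x (![1, 2] i)) := by
  funext x
  simp only [cubicGamma, regularizedPotential, Fin.prod_univ_three, Fin.sum_univ_three,
    Fin.prod_univ_two, Fin.sum_univ_two, Matrix.cons_val]
  ring

lemma isC11_cubicGamma (E : ℝ) : IsC11 (cubicGamma E) := by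
  have hsmooth {f : (Fin 6 → ℝ) → ℝ} (hf : ContDiff ℝ 2 f) : IsC11 f := .of_contDiff hf
  rw [cubicGamma_eq]
  exact ((((hsmooth (by fun_prop)).sub
    ((hsmooth (by fun_prop)).mul (isC11_regularizedPotential_comp _))).sub
    ((hsmooth (by fun_prop)).mul (isC11_regularizedPotential_comp _))).sub
    ((hsmooth (by fun_prop)).mul (isC11_regularizedPotential_comp _))).sub
    ((hsmooth (by fun_prop)).mul (isC11_regularizedPotential_comp _))

/-! ### Hamiltonian vector fields and their symmetries -/

section Hamiltonian

variable {ι : Type*} [Fintype ι] [DecidableEq ι] {J A : Matrix ι ι ℝ} {H : (ι → ℝ) → ℝ}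

/-- The vector field `J ∇H` generated by the function `H` and the constant Poisson matrix `J`. -/
noncomputable def hamiltonianField (J : Matrix ι ι ℝ) (H : (ι → ℝ) → ℝ) (x : ι → ℝ) : ι → ℝ :=
  J *ᵥ fun i => fderiv ℝ H x (Pi.single i 1)

lemma IsC11.locallyLipschitz_hamiltonianField (hH : IsC11 H) :
    LocallyLipschitz (hamiltonianField J H) := by
  have hlin : ContDiff ℝ 1 fun φ : (ι → ℝ) →L[ℝ] ℝ => J *ᵥ fun i => φ (Pi.single i 1) := by
    unfold Matrix.mulVec dotProduct
    fun_prop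
  exact hlin.locallyLipschitz.comp hH.locallyLipschitz_fderiv

lemma fderiv_apply_single_of_invariant (hH : Differentiable ℝ H) (hinv : ∀ x, H (A *ᵥ x) = H x)
    (x : ι → ℝ) :
    (fun i => fderiv ℝ H x (Pi.single i 1)) =
      Aᵀ *ᵥ fun i => fderiv ℝ H (A *ᵥ x) (Pi.single i 1) := by
  have hchain : fderiv ℝ H x =
      (fderiv ℝ H (A *ᵥ x)).comp A.mulVecLin.toContinuousLinearMap := by
    conv_lhs => rw [← funext hinv]
    exact ((hH _).hasFDerivAt.comp x A.mulVecLin.toContinuousLinearMap.hasFDerivAt).fderiv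
  funext i
  have hcol : A *ᵥ Pi.single i 1 = ∑ j, A j i • Pi.single j (1 : ℝ) := by
    rw [Matrix.mulVec_single_one]
    exact (Finset.univ_sum_single (A.col i)).symm.trans (by simp [← Pi.single_smul])
  calc fderiv ℝ H x (Pi.single i 1)
      = fderiv ℝ H (A *ᵥ x) (A *ᵥ Pi.single i 1) := by rw [hchain]; rfl
    _ = ∑ j, A j i * fderiv ℝ H (A *ᵥ x) (Pi.single j 1) := by
      rw [hcol, map_sum]
      simp only [map_smul, smul_eq_mul]

lemma hamiltonianField_mulVec (hA : A * J * Aᵀ = J) (hH : Differentiable ℝ H)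
    (hinv : ∀ x, H (A *ᵥ x) = H x) (x : ι → ℝ) :
    hamiltonianField J H (A *ᵥ x) = A *ᵥ hamiltonianField J H x := by
  simp only [hamiltonianField, fderiv_apply_single_of_invariant hH hinv x, Matrix.mulVec_mulVec,
    ← Matrix.mul_assoc, hA]

end Hamiltonian

/-! ### The cubic configuration -/

/-- The canonical Poisson matrix in the coordinates `(Q₁,Q₂,Q₃,P₁,P₂,P₃)`. -/
def poisson6 : Matrix (Fin 6) (Fin 6) ℝ :=
  !![0, 0, 0, 1, 0, 0;
     0, 0, 0, 0, 1, 0;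
     0, 0, 0, 0, 0, 1;
     -1, 0, 0, 0, 0, 0;
     0, -1, 0, 0, 0, 0;
     0, 0, -1, 0, 0, 0]

lemma poisson6_mulVec (x : Fin 6 → ℝ) :
    poisson6 *ᵥ x = ![x 3, x 4, x 5, -x 0, -x 1, -x 2] := by
  ext i
  fin_cases i <;> simp [poisson6, Matrix.mulVec, dotProduct, Fin.sum_univ_succ]

lemma Sf_mulVec (x : Fin 6 → ℝ) : Sf *ᵥ x = ![x 2, -x 0, x 1, x 5, -x 3, x 4] := by
  ext i
  fin_cases i <;> simp [Sf, Matrix.mulVec, dotProduct, Fin.sum_univ_succ]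

lemma Sf_mul_poisson6_mul_transpose : Sf * poisson6 * Sfᵀ = poisson6 := by
  ext i j
  fin_cases i <;> fin_cases j <;> simp [Sf, poisson6, Matrix.mul_apply, Fin.sum_univ_succ]

lemma Sf_mulVec_iterate_six : (Sf.mulVec)^[6] = id := by
  funext x
  ext i
  fin_cases i <;> simp [Sf_mulVec]

lemma cubicGamma_Sf_mulVec (E : ℝ) (x : Fin 6 → ℝ) : cubicGamma E (Sf *ᵥ x) = cubicGamma E x := by
  simp only [cubicGamma, Sf_mulVec, Matrix.cons_val]
  ring_nf

lemma pderiv6_eq_fderiv {f : (Fin 6 → ℝ) → ℝ} {x : Fin 6 → ℝ} (hf : DifferentiableAt ℝ f x)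
    (i : Fin 6) : pderiv6 f i x = fderiv ℝ f x (Pi.single i 1) :=
  (hf.hasFDerivAt.comp_hasDerivAt_of_eq (x i) (hasDerivAt_update x i (x i)) (by simp)).deriv

lemma IsCubicSol.isIntegralCurve {E : ℝ} {γ : ℝ → Fin 6 → ℝ} (hγ : IsCubicSol E γ) :
    IsIntegralCurve γ fun _ => hamiltonianField poisson6 (cubicGamma E) := by
  intro s
  simp only [IsCubicSol, pderiv6_eq_fderiv ((isC11_cubicGamma E).differentiable _)] at hγ
  simp only [hamiltonianField, poisson6_mulVec, hasDerivAt_pi]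
  intro i
  fin_cases i
  exacts [(hγ s 0).1, (hγ s 1).1, (hγ s 2).1, (hγ s 0).2, (hγ s 1).2, (hγ s 2).2]

theorem cubic_periodic_orbit_general (E T : ℝ) (γ : ℝ → Fin 6 → ℝ) (hγ : IsCubicSol E γ)
    (hT : γ T = Sf.mulVec (γ 0)) :
    (∀ s : ℝ, γ (s + T) = Sf.mulVec (γ s)) ∧ (∀ s : ℝ, γ (s + 6 * T) = γ s) := by
  have hC11 := isC11_cubicGamma E
  have hequiv : Semiconj Sf.mulVec (hamiltonianField poisson6 (cubicGamma E))
      (hamiltonianField poisson6 (cubicGamma E)) := fun x =>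
    (hamiltonianField_mulVec Sf_mul_poisson6_mul_transpose hC11.differentiable
      (cubicGamma_Sf_mulVec E) x).symm
  have hshift : Semiconj γ (· + T) Sf.mulVec :=
    semiconj_of_locallyLipschitz (L := Sf.mulVecLin.toContinuousLinearMap)
      hC11.locallyLipschitz_hamiltonianField hequiv hγ.isIntegralCurve hT
  refine ⟨hshift, fun s => ?_⟩
  have hperiod := hshift.iterate_right 6 s
  rw [Sf_mulVec_iterate_six, add_right_iterate] at hperiod
  simpa using hperiod

/-- If a solution `γ` of the regularized Hamiltonian system (with energy `E < 0`) satisfies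
`γ(0) = (0, α, α, √2, −β, β)` and `γ(2τ) = (α, 0, α, β, −√2, −β)` for some `τ > 0`, then
`γ(s + 2τ) = S_f γ(s)` for all `s`, and `γ` is `12τ`-periodic. -/
theorem cubic_periodic_orbit (E α β τ : ℝ) (hE : E < 0) (hτ : 0 < τ)
    (γ : ℝ → Fin 6 → ℝ) (hγ : IsCubicSol E γ)
    (h0 : γ 0 = ![0, α, α, Real.sqrt 2, -β, β])
    (h2 : γ (2 * τ) = ![α, 0, α, β, -Real.sqrt 2, -β]) :
    (∀ s : ℝ, γ (s + 2 * τ) = Sf.mulVec (γ s)) ∧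
    (∀ s : ℝ, γ (s + 12 * τ) = γ s) := by
  have hT : γ (2 * τ) = Sf.mulVec (γ 0) := by rw [h0, h2, Sf_mulVec]; simp
  simpa [← mul_assoc, show (6 : ℝ) * 2 = 12 by norm_num] using
    cubic_periodic_orbit_general E (2 * τ) γ hγ hT
end

section
/- Let γ be a T-periodic solution of the Hamiltonian system ẋ = J∇Γ(x) and let S be a 2n×2n real orthogonal matrix with SJ = JS, Γ(Sx) = Γ(x) for all x, and γ(s + T/N) = S γ(s) for all s, for some N ∈ ℕ, N ≥ 1. Then the fundamental matrix solution X of the linearization along γ satisfies X(kT/N) = Sᵏ (Sᵀ X(T/N))ᵏ for every k ∈ ℕ. -/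
/-!
If `S` is invertible with `S J Sᵀ = J` and `Γ` is `S`-invariant, the chain rule gives
`D²Γ(x) = Sᵀ D²Γ(Sx) S`. Hence the coefficient `A(s) = J D²Γ(γ(s))` of the linearization satisfies
`A(s + τ) S = S A(s)` as soon as `γ(s + τ) = S γ(s)`. Then `X(s + τ)` and `S X(s) S⁻¹ X(τ)` solve
the same linear equation with the same value at `s = 0`, so they coincide, and the formula for
`X(kτ)` follows by iteration. An orthogonal `S` commuting with `J` satisfies `S J Sᵀ = J`.
-/

open Matrix

/-- The standard `2n × 2n` symplectic matrix `J = [[0, I],[−I, 0]]`, with the index set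
`Fin n ⊕ Fin n` (first summand: configuration coordinates, second: momenta). -/
def stdJ (n : ℕ) : Matrix (Fin n ⊕ Fin n) (Fin n ⊕ Fin n) ℝ :=
  Matrix.fromBlocks 0 1 (-1) 0

/-- The gradient of `f : ℝ^ι → ℝ` at `x`, componentwise via the Fréchet derivative. -/
noncomputable def gradV {ι : Type} [Fintype ι] [DecidableEq ι]
    (f : (ι → ℝ) → ℝ) (x : ι → ℝ) : ι → ℝ :=
  fun i => fderiv ℝ f x (Pi.single i 1)

/-- The Hessian matrix `D²f(x)` of `f : ℝ^ι → ℝ` at `x`. -/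
noncomputable def hessM {ι : Type} [Fintype ι] [DecidableEq ι]
    (f : (ι → ℝ) → ℝ) (x : ι → ℝ) : Matrix ι ι ℝ :=
  Matrix.of fun i j => fderiv ℝ (fun y => fderiv ℝ f y (Pi.single j 1)) x (Pi.single i 1)

section LinearODE

theorem eq_of_hasDerivAt_clm_apply {E : Type*} [NormedAddCommGroup E] [NormedSpace ℝ E]
    {A : ℝ → E →L[ℝ] E} (hA : Continuous A) {f g : ℝ → E}
    (hf : ∀ s, HasDerivAt f (A s (f s)) s) (hg : ∀ s, HasDerivAt g (A s (g s)) s)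
    {t₀ : ℝ} (h₀ : f t₀ = g t₀) : f = g := by
  funext t
  let a := min t₀ t - 1
  let b := max t₀ t + 1
  have ht₀ : t₀ ∈ Set.Ioo a b := by grind
  have ht : t ∈ Set.Ioo a b := by grind
  obtain ⟨K, hK⟩ : ∃ K, ∀ s ∈ Set.Icc a b, ‖A s‖₊ ≤ K := by
    obtain ⟨K, hK⟩ := isCompact_Icc.bddAbove_image (hA.nnnorm.continuousOn (s := Set.Icc a b))
    exact ⟨K, fun s hs => hK (Set.mem_image_of_mem _ hs)⟩
  have hlip : ∀ s ∈ Set.Ioo a b, LipschitzOnWith K (A s) Set.univ := fun s hs =>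
    ((A s).lipschitz.weaken (hK s (Set.Ioo_subset_Icc_self hs))).lipschitzOnWith
  exact ODE_solution_unique_of_mem_Ioo hlip ht₀ (fun s _ => ⟨hf s, Set.mem_univ _⟩)
    (fun s _ => ⟨hg s, Set.mem_univ _⟩) h₀ ht

variable {R : Type*} [NormedRing R] [NormedAlgebra ℝ R]

/-- The fundamental solution, normalized at time `0`, of the linear equation `X' = A X` with
coefficients in a normed algebra such as the square matrices. -/
structure IsFundamentalSolution (A X : ℝ → R) : Prop where
  map_zero : X 0 = 1
  hasDerivAt (s : ℝ) : HasDerivAt X (A s * X s) s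

namespace IsFundamentalSolution

variable {A X : ℝ → R} {τ : ℝ} {u v : R}

theorem map_add (hX : IsFundamentalSolution A X) (hA : Continuous A)
    (hAu : ∀ s, A (s + τ) * u = u * A s) (huv : u * v = 1) (s : ℝ) :
    X (s + τ) = u * X s * (v * X τ) := by
  have hshift (s : ℝ) : HasDerivAt (fun s => X (s + τ)) (A (s + τ) * X (s + τ)) s :=
    (hX.hasDerivAt (s + τ)).comp_add_const s τ
  have hconj (s : ℝ) : HasDerivAt (fun s => u * X s * (v * X τ))
      (A (s + τ) * (u * X s * (v * X τ))) s := by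
    convert ((hX.hasDerivAt s).const_mul u).mul_const (v * X τ) using 1
    simp only [← mul_assoc, hAu]
  have hzero : X (0 + τ) = u * X 0 * (v * X τ) := by
    rw [zero_add, hX.map_zero, mul_one, ← mul_assoc, huv, one_mul]
  have hAτ : Continuous fun s => ContinuousLinearMap.mul ℝ R (A (s + τ)) := by fun_prop
  exact congrFun (eq_of_hasDerivAt_clm_apply hAτ hshift hconj hzero) s

theorem map_natCast_mul (hX : IsFundamentalSolution A X) (hA : Continuous A)
    (hAu : ∀ s, A (s + τ) * u = u * A s) (huv : u * v = 1) (k : ℕ) :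
    X (k * τ) = u ^ k * (v * X τ) ^ k := by
  induction k with
  | zero => simp [hX.map_zero]
  | succ k ih =>
    calc X ((k + 1 : ℕ) * τ) = X (k * τ + τ) := by rw [Nat.cast_succ, add_one_mul]
      _ = u * (u ^ k * (v * X τ) ^ k) * (v * X τ) := by rw [hX.map_add hA hAu huv, ih]
      _ = u ^ (k + 1) * (v * X τ) ^ (k + 1) := by
        rw [pow_succ', pow_succ (v * X τ)]
        simp only [mul_assoc]

end IsFundamentalSolution

end LinearODE

section Hessian

theorem fderiv_fderiv_comp_clm {𝕜 E F G : Type*} [NontriviallyNormedField 𝕜]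
    [NormedAddCommGroup E] [NormedSpace 𝕜 E] [NormedAddCommGroup F] [NormedSpace 𝕜 F]
    [NormedAddCommGroup G] [NormedSpace 𝕜 G] {f : F → G} (hf : ContDiff 𝕜 2 f)
    (L : E →L[𝕜] F) (x v w : E) :
    fderiv 𝕜 (fderiv 𝕜 (f ∘ L)) x v w = fderiv 𝕜 (fderiv 𝕜 f) (L x) (L v) (L w) := by
  simpa [iteratedFDeriv_two_apply] using
    DFunLike.congr_fun (L.iteratedFDeriv_comp_right hf x le_rfl) ![v, w]

theorem differentiable_fderiv_of_contDiff_two {𝕜 E F : Type*} [NontriviallyNormedField 𝕜]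
    [NormedAddCommGroup E] [NormedSpace 𝕜 E] [NormedAddCommGroup F] [NormedSpace 𝕜 F]
    {f : E → F} (hf : ContDiff 𝕜 2 f) : Differentiable 𝕜 (fderiv 𝕜 f) :=
  (hf.fderiv_right (m := 1) one_add_one_eq_two.le).differentiable one_ne_zero

variable {ι κ : Type} [Fintype ι] [DecidableEq ι] [Fintype κ] [DecidableEq κ]
  {f : (ι → ℝ) → ℝ}

theorem hessM_eq_toMatrix₂' {x : ι → ℝ} (hf : DifferentiableAt ℝ (fderiv ℝ f) x) :
    hessM f x = LinearMap.toMatrix₂' ℝ (fderiv ℝ (fderiv ℝ f) x).toLinearMap₁₂ := by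
  ext i j
  simp [hessM, fderiv_clm_apply hf (differentiableAt_const _)]

theorem continuous_hessM (hf : ContDiff ℝ 2 f) : Continuous (hessM f) := by
  have hcont : Continuous (fderiv ℝ (fderiv ℝ f)) :=
    (hf.fderiv_right (m := 1) one_add_one_eq_two.le).continuous_fderiv one_ne_zero
  refine continuous_matrix fun i j => ?_
  simp only [hessM_eq_toMatrix₂' (differentiable_fderiv_of_contDiff_two hf _),
    LinearMap.toMatrix₂'_apply, ContinuousLinearMap.toLinearMap₁₂_apply_apply_apply]
  exact (hcont.clm_apply continuous_const).clm_apply continuous_const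

theorem hessM_comp_mulVec (hf : ContDiff ℝ 2 f) (S : Matrix ι κ ℝ) (x : κ → ℝ) :
    hessM (fun y => f (S *ᵥ y)) x = Sᵀ * hessM f (S *ᵥ x) * S := by
  let L : (κ → ℝ) →L[ℝ] (ι → ℝ) := S.mulVecLin.toContinuousLinearMap
  have hfL : ContDiff ℝ 2 (f ∘ L) := hf.comp L.contDiff
  have hpullback : (fderiv ℝ (fderiv ℝ (f ∘ L)) x).toLinearMap₁₂ =
      (fderiv ℝ (fderiv ℝ f) (S *ᵥ x)).toLinearMap₁₂.compl₁₂ S.mulVecLin S.mulVecLin :=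
    LinearMap.ext₂ (fderiv_fderiv_comp_clm hf L x)
  calc hessM (f ∘ L) x
      = LinearMap.toMatrix₂' ℝ (fderiv ℝ (fderiv ℝ (f ∘ L)) x).toLinearMap₁₂ :=
        hessM_eq_toMatrix₂' (differentiable_fderiv_of_contDiff_two hfL x)
    _ = Sᵀ * hessM f (S *ᵥ x) * S := by
      rw [hpullback, LinearMap.toMatrix₂'_compl₁₂,
        hessM_eq_toMatrix₂' (differentiable_fderiv_of_contDiff_two hf _),
        ← Matrix.toLin'_apply', LinearMap.toMatrix'_toLin']

end Hessian

theorem mul_hessM_mulVec_mul {ι : Type} [Fintype ι] [DecidableEq ι]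
    {Γ : (ι → ℝ) → ℝ} (hΓ : ContDiff ℝ 2 Γ) {J S : Matrix ι ι ℝ}
    (hSinv : ∀ x, Γ (S *ᵥ x) = Γ x) (hSJ : S * J * Sᵀ = J) (x : ι → ℝ) :
    J * hessM Γ (S *ᵥ x) * S = S * (J * hessM Γ x) := by
  have hHess : hessM Γ x = Sᵀ * hessM Γ (S *ᵥ x) * S := by
    rw [← hessM_comp_mulVec hΓ, funext hSinv]
  calc J * hessM Γ (S *ᵥ x) * S = S * J * Sᵀ * hessM Γ (S *ᵥ x) * S := by rw [hSJ]
    _ = S * (J * hessM Γ x) := by rw [hHess]; simp only [Matrix.mul_assoc]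

open scoped Matrix.Norms.Operator in
theorem roberts_time_preserving_iterate_general {ι : Type} [Fintype ι] [DecidableEq ι]
    {Γ : (ι → ℝ) → ℝ} (hΓ : ContDiff ℝ 2 Γ) {γ : ℝ → ι → ℝ} (hγ : Continuous γ)
    {J S : Matrix ι ι ℝ} (hS : IsUnit S) (hSJ : S * J * Sᵀ = J)
    (hSinv : ∀ x, Γ (S *ᵥ x) = Γ x) {τ : ℝ} (hsym : ∀ s, γ (s + τ) = S *ᵥ γ s)
    {X : ℝ → Matrix ι ι ℝ} (hX0 : X 0 = 1)
    (hX : ∀ s i j, HasDerivAt (fun u => X u i j) ((J * hessM Γ (γ s) * X s) i j) s) (k : ℕ) :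
    X (k * τ) = S ^ k * (S⁻¹ * X τ) ^ k := by
  have hfund : IsFundamentalSolution (fun s => J * hessM Γ (γ s)) X :=
    ⟨hX0, fun s => hasDerivAt_pi.2 fun i => hasDerivAt_pi.2 (hX s i)⟩
  have hcont : Continuous fun s => J * hessM Γ (γ s) :=
    continuous_const.mul ((continuous_hessM hΓ).comp hγ)
  have hconj (s : ℝ) : J * hessM Γ (γ (s + τ)) * S = S * (J * hessM Γ (γ s)) := by
    rw [hsym, mul_hessM_mulVec_mul hΓ hSinv hSJ]
  exact hfund.map_natCast_mul hcont hconj (S.mul_nonsing_inv (S.isUnit_iff_isUnit_det.1 hS)) k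

/-- Roberts' Corollary 2.2: under the hypotheses of the time-preserving symmetry lemma,
the fundamental matrix solution satisfies `X(kT/N) = Sᵏ (Sᵀ X(T/N))ᵏ` for every `k ∈ ℕ`. -/
theorem roberts_time_preserving_iterate (n N : ℕ) (hn : 1 ≤ n) (hN : 1 ≤ N) (T : ℝ) (hT : 0 < T)
    (Γ : ((Fin n ⊕ Fin n) → ℝ) → ℝ) (hΓ : ContDiff ℝ 2 Γ)
    (γ : ℝ → (Fin n ⊕ Fin n) → ℝ)
    (hsol : ∀ s : ℝ, HasDerivAt γ ((stdJ n).mulVec (gradV Γ (γ s))) s)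
    (hper : ∀ s : ℝ, γ (s + T) = γ s)
    (S : Matrix (Fin n ⊕ Fin n) (Fin n ⊕ Fin n) ℝ)
    (hsym : ∀ s : ℝ, γ (s + T / N) = S.mulVec (γ s))
    (hSinv : ∀ x, Γ (S.mulVec x) = Γ x)
    (hSJ : S * stdJ n = stdJ n * S)
    (horth : Sᵀ * S = 1)
    (X : ℝ → Matrix (Fin n ⊕ Fin n) (Fin n ⊕ Fin n) ℝ)
    (hX0 : X 0 = 1)
    (hX : ∀ (s : ℝ) (i j : Fin n ⊕ Fin n),
      HasDerivAt (fun u => X u i j) ((stdJ n * hessM Γ (γ s) * X s) i j) s) :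
    ∀ k : ℕ, X ((k : ℝ) * T / N) = S ^ k * (Sᵀ * X (T / N)) ^ k := by
  have horth' : S * Sᵀ = 1 := mul_eq_one_comm.1 horth
  intro k
  rw [mul_div_assoc, ← Matrix.inv_eq_left_inv horth]
  exact roberts_time_preserving_iterate_general hΓ
    (continuous_iff_continuousAt.2 fun s => (hsol s).continuousAt) (.of_mul_eq_one _ horth')
    (by rw [hSJ, Matrix.mul_assoc, horth', Matrix.mul_one]) hSinv hsym hX0 hX k
end
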